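/- Let S be an ℕ-graded polynomial ring over a field k, U a Noetherian k-scheme, and Z ⊆ Spec(S) × U a closed subscheme cut out by a homogeneous ideal. Then the set of Hilbert functions of the fibers of the projection p : Z → U is finite. -/

import Mathlib

/-!
The proof is Noetherian induction on closed subsets `V(J)` of `Spec A`. If `J` is not prime, `V(J)`
is a union of two smaller closed sets (or empty), so the point is to show that over an irreducible
`V(p₀)` the Hilbert function is constant away from a hypersurface `f = 0`
(`exists_generic_fiberHilbertFunction`).

For this, fix a monomial order and take a Gröbner basis over the generic point of `V(p₀)`:
elements `g₁, …, g_r` of `I' = I + p₀A[x]`, finite in number by Dickson's lemma, whose leading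
monomials modulo `p₀` generate all the leading monomials of `I'` modulo `p₀`. Let `f` be the product
of their leading coefficients and `Λ` the set of the remaining, standard, monomials. Division by
the `gᵢ` shows that `Λ` spans `A[x]` modulo `I'` once `f` is inverted, and no element of `I'`
supported on `Λ` is nonzero modulo `p₀` (`exists_generic_standard_monomials`). In other words
`A[x]/I'` becomes free over `(A/p₀)_f` with basis `Λ`. Both properties descend to every fiber over a
point of `V(p₀)` with `f ≠ 0`: spanning is immediate, and independence is
`eq_zero_of_mem_fiber_ideal`. As `I` is homogeneous, this holds degree by degree, and the Hilbert
function of each such fiber counts the monomials of `Λ` (`finrank_fiber_eq_card`).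
-/

open MvPolynomial

/-- The Hilbert function of the fiber over the point of `U = Spec A` corresponding to a
prime `p ⊆ A`, for the closed subscheme `Z ⊆ Spec(S) × U` cut out by the homogeneous
ideal `I ⊆ S ⊗ A = A[x]`:  `e ↦ dim_{κ(p)}` of the degree-`e` part of the coordinate
ring `(κ(p)[x])/I·κ(p)[x]` of the fiber, where `κ(p) = Frac(A/p)` is the residue field. -/
noncomputable def fiberHilbertFunction {n : ℕ} {A : Type*} [CommRing A]
    (I : Ideal (MvPolynomial (Fin n) A)) (p : Ideal A) [p.IsPrime] : ℕ → ℕ :=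
  fun e =>
    letI κ := FractionRing (A ⧸ p)
    letI φ : A →+* κ := (algebraMap (A ⧸ p) κ).comp (Ideal.Quotient.mk p)
    letI Ip : Ideal (MvPolynomial (Fin n) κ) := I.map (MvPolynomial.map φ)
    Module.finrank κ
      (Submodule.map ((Ip.restrictScalars κ).mkQ)
        (homogeneousSubmodule (Fin n) κ e))

/-! ### Normal forms up to powers of an element -/

/-- `t` has, up to a power of `f`, a normal form modulo `I'` that is supported on the monomials
in `Λ` and whose coefficients lie in `J`. -/
def HasNormalForm {n : ℕ} {A : Type*} [CommRing A] (I' : Ideal (MvPolynomial (Fin n) A))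
    (Λ : Set (Fin n →₀ ℕ)) (f : A) (J : Ideal A) (t : MvPolynomial (Fin n) A) : Prop :=
  ∃ (N : ℕ) (r : MvPolynomial (Fin n) A), C (f ^ N) * t - r ∈ I' ∧
    r ∈ restrictSupport A Λ ∧ ∀ d, coeff d r ∈ J

section NormalForm

variable {n : ℕ} {A : Type*} [CommRing A] {I' : Ideal (MvPolynomial (Fin n) A)}
  {Λ : Set (Fin n →₀ ℕ)} {f : A} {J : Ideal A}

lemma HasNormalForm.of_mem {t : MvPolynomial (Fin n) A} (ht : t ∈ I') :
    HasNormalForm I' Λ f J t :=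
  ⟨0, 0, by simpa using ht, zero_mem _, by simp⟩

lemma HasNormalForm.add {s t : MvPolynomial (Fin n) A} (hs : HasNormalForm I' Λ f J s)
    (ht : HasNormalForm I' Λ f J t) : HasNormalForm I' Λ f J (s + t) := by
  obtain ⟨N, r, h1, h2, h3⟩ := hs
  obtain ⟨M, u, k1, k2, k3⟩ := ht
  refine ⟨N + M, f ^ M • r + f ^ N • u, ?_, add_mem (Submodule.smul_mem _ _ h2)
    (Submodule.smul_mem _ _ k2), fun d => ?_⟩
  · have := add_mem (I'.mul_mem_left (C (f ^ M)) h1) (I'.mul_mem_left (C (f ^ N)) k1)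
    convert this using 1
    simp only [smul_eq_C_mul, pow_add, C_mul]
    ring
  · simp only [coeff_add, coeff_smul, smul_eq_mul]
    exact add_mem (J.mul_mem_left _ (h3 d)) (J.mul_mem_left _ (k3 d))

/-- Multiplying by a scalar in `J` moves the coefficients of a normal form into `J`. -/
lemma HasNormalForm.smul {t : MvPolynomial (Fin n) A} (ht : HasNormalForm I' Λ f ⊤ t) {a : A}
    (ha : a ∈ J) : HasNormalForm I' Λ f J (C a * t) := by
  obtain ⟨N, r, h1, h2, -⟩ := ht
  refine ⟨N, a • r, ?_, Submodule.smul_mem _ _ h2, fun d => ?_⟩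
  · convert I'.mul_mem_left (C a) h1 using 1
    rw [smul_eq_C_mul]
    ring
  · rw [coeff_smul, smul_eq_mul]
    exact J.mul_mem_right _ ha

lemma HasNormalForm.of_monomials {t : MvPolynomial (Fin n) A}
    (h : ∀ d, HasNormalForm I' Λ f J (monomial d (coeff d t))) : HasNormalForm I' Λ f J t := by
  rw [t.as_sum]
  refine Finset.sum_induction _ (HasNormalForm I' Λ f J) (fun _ _ => HasNormalForm.add)
    (.of_mem (zero_mem _)) fun d _ => h d

lemma HasNormalForm.of_mul {t : MvPolynomial (Fin n) A}
    (h : HasNormalForm I' Λ f J (C f * t)) : HasNormalForm I' Λ f J t := by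
  obtain ⟨N, r, h1, h2, h3⟩ := h
  refine ⟨N + 1, r, ?_, h2, h3⟩
  rwa [pow_succ, C_mul, mul_assoc]

end NormalForm

/-! ### Generic Gröbner bases -/

/-- Dickson's lemma in the form: a set of monomials is contained in the upward closure of a
finite subset. -/
lemma exists_finset_dickson {n : ℕ} (L : Set (Fin n →₀ ℕ)) :
    ∃ D : Finset (Fin n →₀ ℕ), (∀ d ∈ D, d ∈ L) ∧ ∀ e ∈ L, ∃ d ∈ D, d ≤ e := by
  have hfin : {d | Minimal (· ∈ L) d}.Finite :=
    (setOfPred_minimal_antichain (· ∈ L)).finite_of_wellQuasiOrdered wellQuasiOrdered_le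
  refine ⟨hfin.toFinset, fun d hd => ?_, fun e he => ?_⟩
  · exact ((Set.Finite.mem_toFinset _).1 hd).prop
  · obtain ⟨d, hde, hd⟩ := exists_minimal_le_of_wellFoundedLT (· ∈ L) e he
    exact ⟨d, by simpa using hd, hde⟩

/-- Gröbner bases over the generic point of `V(p₀)`: away from a hypersurface `f = 0`, the
monomials of `Λ` (the non-leading monomials of `I'` modulo `p₀`) span `A[x]` modulo `I'`, and
an element of `I'` supported on `Λ` vanishes modulo `p₀`. -/
lemma exists_generic_standard_monomials {n : ℕ} {A : Type*} [CommRing A]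
    (I' : Ideal (MvPolynomial (Fin n) A)) (p₀ : Ideal A) [hp₀ : p₀.IsPrime]
    (hI' : p₀.map C ≤ I') :
    ∃ (Λ : Set (Fin n →₀ ℕ)) (f : A), f ∉ p₀ ∧
      (∀ d, HasNormalForm I' Λ f ⊤ (monomial d 1)) ∧
      (∀ r ∈ I', r ∈ restrictSupport A Λ → ∀ d, coeff d r ∈ p₀) := by
  classical
  let m : MonomialOrder (Fin n) := MonomialOrder.lex
  let IsLead (g : MvPolynomial (Fin n) A) (d : Fin n →₀ ℕ) : Prop :=
    g ∈ I' ∧ coeff d g ∉ p₀ ∧ ∀ e, m.toSyn d < m.toSyn e → coeff e g ∈ p₀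
  let L : Set (Fin n →₀ ℕ) := {d | ∃ g, IsLead g d}
  obtain ⟨D, hDL, hD⟩ := exists_finset_dickson L
  choose! g hg using hDL
  -- inverting `f` makes the leading coefficients of the finite Gröbner basis units
  refine ⟨Lᶜ, ∏ d ∈ D, coeff d (g d), ?_, ?_, ?_⟩
  · rw [hp₀.prod_mem_iff]
    rintro ⟨d, hd, h⟩
    exact (hg d hd).2.1 h
  · intro e
    generalize hs : m.toSyn e = s
    induction s using m.wellFoundedLT_syn.induction generalizing e with
    | _ s ih =>
    subst hs
    by_cases he : e ∈ L
    · obtain ⟨d, hd, hde⟩ := hD e he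
      obtain ⟨hgI, -, hglt⟩ := hg d hd
      apply HasNormalForm.of_mul
      set a := ∏ i ∈ D.erase d, coeff i (g i) with ha
      have hf : ∏ i ∈ D, coeff i (g i) = a * coeff d (g d) :=
        (Finset.prod_erase_mul D _ hd).symm
      set F := ∏ i ∈ D, coeff i (g i)
      have hq : monomial (e - d) a * g d ∈ I' := I'.mul_mem_left _ hgI
      rw [← sub_add_cancel (C F * monomial e 1) (monomial (e - d) a * g d)]
      refine HasNormalForm.add (HasNormalForm.of_monomials fun e' => ?_) (.of_mem hq)
      -- above `e` the coefficients of the difference lie in `p₀`, at `e` they cancel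
      set c := coeff e' (C F * monomial e 1 - monomial (e - d) a * g d) with hc
      by_cases hlt : m.toSyn e' < m.toSyn e
      · have := (ih _ hlt e' rfl).smul (Submodule.mem_top (x := c))
        rwa [C_mul_monomial, mul_one] at this
      · refine .of_mem (hI' (mem_map_C_iff.2 fun e'' => ?_))
        rw [coeff_monomial]
        split_ifs
        swap
        · exact zero_mem _
        rw [hc, coeff_sub, C_mul_monomial, mul_one, coeff_monomial, coeff_monomial_mul']
        rcases eq_or_ne e e' with rfl | hne
        · rw [if_pos rfl, if_pos tsub_le_self, tsub_tsub_cancel_of_le hde, hf, sub_self]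
          exact zero_mem _
        · rw [if_neg hne, zero_sub, neg_mem_iff]
          split_ifs with hle
          swap
          · exact zero_mem _
          refine p₀.mul_mem_left _ (hglt _ ?_)
          have h1 : m.toSyn e < m.toSyn e' :=
            lt_of_le_of_ne (not_lt.1 hlt) fun h => hne (m.toSyn.injective h)
          have h2 : e = (e - d) + d := (tsub_add_cancel_of_le hde).symm
          have h3 : e' = (e - d) + (e' - (e - d)) := (add_tsub_cancel_of_le hle).symm
          rw [h2, h3, map_add, map_add] at h1
          simpa using lt_of_add_lt_add_left h1
    · refine ⟨0, monomial e 1, by simp, ?_, fun _ => trivial⟩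
      rw [monomial_mem_restrictSupport]
      exact .inl he
  · intro r hr hrΛ d
    by_contra hd
    obtain ⟨e, he, hmax⟩ := Finset.exists_max_image
      (r.support.filter fun d => coeff d r ∉ p₀) m.toSyn
      ⟨d, by
        rw [Finset.mem_filter, mem_support_iff]
        exact ⟨fun h => hd (h ▸ zero_mem _), hd⟩⟩
    rw [Finset.mem_filter] at he
    -- `e` is a leading monomial of `r` modulo `p₀`, so it cannot lie in `Λ = Lᶜ`
    refine hrΛ he.1 ⟨r, hr, he.2, fun e' hlt => ?_⟩
    by_contra h
    refine (hmax e' ?_).not_gt hlt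
    rw [Finset.mem_filter, mem_support_iff]
    exact ⟨fun h0 => h (h0 ▸ zero_mem _), h⟩

/-! ### Descent to the fibers -/

section Fiber

variable {n : ℕ} {A : Type*} [CommRing A] {K : Type*} [Field K] {φ : A →+* K}

/-- The hypothesis `hφ` says that `K` is the fraction field of the image of `φ`. Clearing
denominators must not create new monomials, so that supports in `Λ` are preserved. -/
lemma exists_clear_denominators
    (hφ : ∀ x : K, ∃ a b, φ b ≠ 0 ∧ φ b * x = φ a) (h : MvPolynomial (Fin n) K) :
    ∃ (c : A) (t : MvPolynomial (Fin n) A), φ c ≠ 0 ∧ C (φ c) * h = map φ t ∧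
      t.support ⊆ h.support := by
  classical
  choose a b hb hab using hφ
  have key : ∀ d ∈ h.support, φ (∏ e ∈ h.support, b (coeff e h)) * coeff d h =
      φ ((∏ e ∈ h.support.erase d, b (coeff e h)) * a (coeff d h)) := by
    intro d hd
    rw [← Finset.prod_erase_mul _ _ hd, map_mul, map_mul, mul_assoc, hab]
  refine ⟨∏ e ∈ h.support, b (coeff e h), ∑ d ∈ h.support,
    monomial d ((∏ e ∈ h.support.erase d, b (coeff e h)) * a (coeff d h)), ?_, ?_, ?_⟩
  · rw [map_prod]
    exact Finset.prod_ne_zero_iff.2 fun e _ => hb _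
  · conv_lhs => enter [2]; rw [h.as_sum]
    rw [map_sum, Finset.mul_sum]
    refine Finset.sum_congr rfl fun d hd => ?_
    rw [C_mul_monomial, map_monomial, key d hd]
  · refine (support_sum).trans (Finset.biUnion_subset.2 fun d hd => ?_)
    exact support_monomial_subset.trans (Finset.singleton_subset_iff.2 hd)

lemma exists_mul_eq_map_of_mem_map
    (hφ : ∀ x : K, ∃ a b, φ b ≠ 0 ∧ φ b * x = φ a) (I : Ideal (MvPolynomial (Fin n) A))
    {h : MvPolynomial (Fin n) K} (hh : h ∈ I.map (map φ)) :
    ∃ (c : A) (s : MvPolynomial (Fin n) A), s ∈ I ∧ φ c ≠ 0 ∧ C (φ c) * h = map φ s := by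
  induction hh using Submodule.span_induction with
  | mem x hx =>
    obtain ⟨s, hs, rfl⟩ := hx
    exact ⟨1, s, hs, by simp, by simp⟩
  | zero => exact ⟨1, 0, zero_mem _, by simp, by simp⟩
  | add x y _ _ hx hy =>
    obtain ⟨c, s, h1, h2, h3⟩ := hx
    obtain ⟨d, t, k1, k2, k3⟩ := hy
    refine ⟨c * d, C d * s + C c * t, add_mem (I.mul_mem_left _ h1) (I.mul_mem_left _ k1),
      by simp [h2, k2], ?_⟩
    rw [map_add (map φ), map_mul (map φ), map_mul (map φ), map_C, map_C, ← h3, ← k3, map_mul, C_mul]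
    ring
  | smul q x _ hx =>
    obtain ⟨c, s, h1, h2, h3⟩ := hx
    obtain ⟨d, t, k1, k2, -⟩ := exists_clear_denominators hφ q
    refine ⟨c * d, t * s, I.mul_mem_left _ h1, by simp [h2, k1], ?_⟩
    rw [map_mul (map φ), ← h3, ← k2, map_mul, C_mul, smul_eq_mul]
    ring

variable {I I' : Ideal (MvPolynomial (Fin n) A)} {Λ : Set (Fin n →₀ ℕ)} {f : A} {p₀ : Ideal A}

/-- The monomials of `Λ` stay independent modulo the ideal of every fiber over a point of
`V(p₀)` where `f` does not vanish. -/
lemma eq_zero_of_mem_fiber_ideal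
    (hφ : ∀ x : K, ∃ a b, φ b ≠ 0 ∧ φ b * x = φ a) (hII' : I ≤ I')
    (hp : ∀ a ∈ p₀, φ a = 0) (hf : φ f ≠ 0)
    (hspan : ∀ d, HasNormalForm I' Λ f ⊤ (monomial d 1))
    (hind : ∀ r ∈ I', r ∈ restrictSupport A Λ → ∀ d, coeff d r ∈ p₀)
    {h : MvPolynomial (Fin n) K} (hh : h ∈ I.map (map φ)) (hΛ : h ∈ restrictSupport K Λ) :
    h = 0 := by
  obtain ⟨c, s, hs, hc, hcs⟩ := exists_mul_eq_map_of_mem_map hφ I hh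
  obtain ⟨b, t, hb, hbt, hts⟩ := exists_clear_denominators hφ h
  have htΛ : t ∈ restrictSupport A Λ := fun d hd => hΛ (hts hd)
  -- `C b * s` and `C c * t` have the same image, so their difference has coefficients in
  -- `ker φ`, and so does its normal form
  have hker : ∀ d, coeff d (C b * s - C c * t) ∈ RingHom.ker φ := by
    intro d
    rw [RingHom.mem_ker, ← coeff_map, map_sub, map_mul, map_mul, map_C, map_C, ← hcs, ← hbt,
      mul_left_comm, sub_self, coeff_zero]
  obtain ⟨N, r, h1, h2, h3⟩ : HasNormalForm I' Λ f (RingHom.ker φ) (C b * s - C c * t) := by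
    refine HasNormalForm.of_monomials fun d => ?_
    have := (hspan d).smul (hker d)
    rwa [C_mul_monomial, mul_one] at this
  have hmem : (f ^ N * c) • t + r ∈ I' := by
    have := sub_mem (I'.mul_mem_left (C (f ^ N) * C b) (hII' hs)) h1
    convert this using 1
    rw [smul_eq_C_mul, C_mul]
    ring
  have hp' := hind _ hmem (add_mem (Submodule.smul_mem _ _ htΛ) h2)
  have ht0 : map φ t = 0 := by
    ext d
    have h4 := hp _ (hp' d)
    rw [coeff_add, coeff_smul, map_add, (RingHom.mem_ker).1 (h3 d), add_zero, smul_eq_mul,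
      map_mul, map_mul, map_pow] at h4
    rw [coeff_map, coeff_zero]
    exact (mul_eq_zero.1 h4).resolve_left (mul_ne_zero (pow_ne_zero _ hf) hc)
  rw [ht0] at hbt
  exact (mul_eq_zero.1 hbt).resolve_left (by simpa using hb)

lemma map_mem_fiber_ideal (hp : ∀ a ∈ p₀, φ a = 0) {s : MvPolynomial (Fin n) A}
    (hs : s ∈ I ⊔ p₀.map C) : map φ s ∈ I.map (map φ) := by
  obtain ⟨u, hu, v, hv, rfl⟩ := Submodule.mem_sup.1 hs
  have : map φ v = 0 := by
    ext d
    rw [coeff_map, coeff_zero]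
    exact hp _ (mem_map_C_iff.1 hv d)
  rw [map_add, this, add_zero]
  exact Ideal.mem_map_of_mem _ hu

/-- The dimension of the degree-`e` part of the coordinate ring of the fiber is the number of
monomials of degree `e` in `Λ`. -/
lemma finrank_fiber_eq_card
    (hφ : ∀ x : K, ∃ a b, φ b ≠ 0 ∧ φ b * x = φ a)
    (hI : ∀ g ∈ I, ∀ i : ℕ, homogeneousComponent i g ∈ I)
    (hp : ∀ a ∈ p₀, φ a = 0) (hf : φ f ≠ 0)
    (hspan : ∀ d, HasNormalForm (I ⊔ p₀.map C) Λ f ⊤ (monomial d 1))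
    (hind : ∀ r ∈ I ⊔ p₀.map C, r ∈ restrictSupport A Λ → ∀ d, coeff d r ∈ p₀) (e : ℕ) :
    Module.finrank K (Submodule.map (((I.map (map φ)).restrictScalars K).mkQ)
      (homogeneousSubmodule (Fin n) K e)) = Nat.card {d // d ∈ Λ ∧ d.degree = e} := by
  classical
  set Q := ((I.map (map φ)).restrictScalars K)
  set Λe : Set (Fin n →₀ ℕ) := {d | d ∈ Λ ∧ d.degree = e} with hΛe
  have : Finite Λe := (Finsupp.finite_of_degree_eq e).subset fun d hd => hd.2
  have : Fintype Λe := Fintype.ofFinite _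
  let v : Λe → MvPolynomial (Fin n) K := fun d => monomial d 1
  have hrange : Submodule.span K (Set.range v) = restrictSupport K Λe := by
    rw [restrictSupport_eq_span, Set.image_eq_range]
  have hv : LinearIndependent K v :=
    (basisMonomials (Fin n) K).linearIndependent.comp _ Subtype.val_injective
  have hli : LinearIndependent K (Q.mkQ ∘ v) := by
    apply hv.map
    rw [hrange, Submodule.ker_mkQ, Submodule.disjoint_def]
    intro h h1 h2
    exact eq_zero_of_mem_fiber_ideal hφ le_sup_left hp hf hspan hind h2
      (restrictSupport_mono _ (fun d hd => hd.1) h1)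
  -- the homogeneous components of `I ⊔ p₀` allow a normal form to be taken degree by degree
  have hhom : ∀ s ∈ I ⊔ p₀.map C, homogeneousComponent e s ∈ I ⊔ p₀.map C := by
    intro s hs
    obtain ⟨u, hu, w, hw, rfl⟩ := Submodule.mem_sup.1 hs
    rw [map_add]
    refine add_mem (Ideal.mem_sup_left (hI u hu e)) (Ideal.mem_sup_right ?_)
    rw [mem_map_C_iff] at hw ⊢
    intro d
    rw [coeff_homogeneousComponent]
    split_ifs
    exacts [hw d, zero_mem _]
  have himage : Submodule.map Q.mkQ (homogeneousSubmodule (Fin n) K e) =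
      Submodule.span K (Set.range (Q.mkQ ∘ v)) := by
    rw [Set.range_comp, Submodule.span_image, hrange]
    apply le_antisymm
    · have hhs : homogeneousSubmodule (Fin n) K e = restrictSupport K {d | d.degree = e} :=
        homogeneousSubmodule_eq_finsupp_supported _ _ _
      rw [hhs, restrictSupport_eq_span, Submodule.map_span_le]
      rintro _ ⟨d, hd, rfl⟩
      obtain ⟨N, r, h1, h2, -⟩ := hspan d
      have h3 := hhom _ h1
      have hcomp : homogeneousComponent e (monomial d (1 : A)) = monomial d 1 :=
        homogeneousComponent_of_mem (m := e) (n := e)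
          (isHomogeneous_monomial _ hd) |>.trans (if_pos rfl)
      rw [map_sub, homogeneousComponent_C_mul, hcomp] at h3
      have h4 := map_mem_fiber_ideal hp h3
      rw [map_sub, map_mul, map_C, map_monomial, map_one] at h4
      have hfN : φ (f ^ N) ≠ 0 := by rw [map_pow]; exact pow_ne_zero _ hf
      have hrΛ : map φ (homogeneousComponent e r) ∈ restrictSupport K Λe := by
        refine (mem_restrictSupport_iff K).2 fun d' hd' => ?_
        rw [Finset.mem_coe, mem_support_iff, coeff_map, coeff_homogeneousComponent] at hd'
        split_ifs at hd' with hdeg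
        · refine ⟨(mem_restrictSupport_iff A).1 h2 ?_, hdeg⟩
          exact mem_support_iff.2 fun h0 => hd' (by rw [h0, map_zero])
        · exact absurd (map_zero φ) hd'
      refine ⟨(φ (f ^ N))⁻¹ • map φ (homogeneousComponent e r),
        Submodule.smul_mem _ _ hrΛ, ?_⟩
      have h5 : Q.mkQ (φ (f ^ N) • monomial d 1) = Q.mkQ (map φ (homogeneousComponent e r)) := by
        rw [← sub_eq_zero, ← map_sub, Submodule.mkQ_apply, Submodule.Quotient.mk_eq_zero,
          smul_eq_C_mul]
        exact h4
      rw [map_smul, ← h5, map_smul, inv_smul_smul₀ hfN]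
    · refine Submodule.map_mono ?_
      rw [homogeneousSubmodule_eq_finsupp_supported]
      exact restrictSupport_mono _ fun d hd => hd.2
  rw [himage, finrank_span_eq_card hli, ← Nat.card_eq_fintype_card]
  rfl

end Fiber

/-! ### Generic constancy and Noetherian induction -/

/-- Over a dense open subset of the irreducible closed set `V(p₀)` the fiber Hilbert function is
constant. -/
lemma exists_generic_fiberHilbertFunction {n : ℕ} {A : Type*} [CommRing A]
    (I : Ideal (MvPolynomial (Fin n) A))
    (hI : ∀ f ∈ I, ∀ i : ℕ, homogeneousComponent i f ∈ I) (p₀ : Ideal A) [p₀.IsPrime] :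
    ∃ f ∉ p₀, ∃ H : ℕ → ℕ, ∀ (p : Ideal A) [p.IsPrime], p₀ ≤ p → f ∉ p →
      fiberHilbertFunction I p = H := by
  obtain ⟨Λ, f, hf, hspan, hind⟩ :=
    exists_generic_standard_monomials (I ⊔ p₀.map C) p₀ le_sup_right
  refine ⟨f, hf, fun e => Nat.card {d // d ∈ Λ ∧ d.degree = e}, fun p _ hp hfp => ?_⟩
  have hker : ∀ a, ((algebraMap (A ⧸ p) (FractionRing (A ⧸ p))).comp
      (Ideal.Quotient.mk p)) a = 0 ↔ a ∈ p := fun a => by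
    rw [RingHom.comp_apply, IsFractionRing.to_map_eq_zero_iff, Ideal.Quotient.eq_zero_iff_mem]
  funext e
  refine finrank_fiber_eq_card (fun x => ?_) hI (fun a ha => (hker a).2 (hp ha))
    (fun h => hfp ((hker f).1 h)) hspan hind e
  obtain ⟨a, b, hb, rfl⟩ := IsFractionRing.div_surjective (A := A ⧸ p) x
  obtain ⟨a, rfl⟩ := Ideal.Quotient.mk_surjective a
  obtain ⟨b, rfl⟩ := Ideal.Quotient.mk_surjective b
  have hb' : algebraMap (A ⧸ p) (FractionRing (A ⧸ p)) (Ideal.Quotient.mk p b) ≠ 0 :=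
    IsFractionRing.to_map_ne_zero_of_mem_nonZeroDivisors hb
  exact ⟨a, b, hb', mul_div_cancel₀ _ hb'⟩

/-- Lemma 2.11.  Let `S` be a (standard) graded polynomial ring over `k`, `U = Spec A` a
Noetherian affine `k`-scheme and `Z ⊆ Spec(S) × U` a closed subscheme cut out by a
homogeneous ideal `I`.  Then the set of Hilbert functions of the fibers of the projection
`p : Z → U` is finite. -/
theorem finite_set_of_fiber_hilbert_functions {n : ℕ} {k A : Type*} [Field k]
    [CommRing A] [Algebra k A] [IsNoetherianRing A]
    (I : Ideal (MvPolynomial (Fin n) A))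
    (hI : ∀ f ∈ I, ∀ i : ℕ, homogeneousComponent i f ∈ I) :
    {H : ℕ → ℕ | ∃ (p : Ideal A) (hp : p.IsPrime),
      H = @fiberHilbertFunction n A _ I p hp}.Finite := by
  classical
  -- Noetherian induction on the closed subset `V(J)` of `Spec A`
  suffices h : ∀ J : Ideal A, {H : ℕ → ℕ | ∃ (p : Ideal A) (hp : p.IsPrime), J ≤ p ∧
      H = @fiberHilbertFunction n A _ I p hp}.Finite by
    refine (h ⊥).subset ?_
    rintro H ⟨p, hp, rfl⟩
    exact ⟨p, hp, bot_le, rfl⟩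
  intro J
  induction J using WellFoundedGT.induction with
  | _ J ih =>
  have hlt : ∀ a ∉ J, J < J ⊔ Ideal.span {a} := fun a ha =>
    lt_of_le_of_ne le_sup_left fun h => ha (h ▸ Ideal.mem_sup_right (Ideal.mem_span_singleton_self a))
  have hsup : ∀ {a : A} {p : Ideal A}, J ≤ p → a ∈ p → J ⊔ Ideal.span {a} ≤ p := fun h1 h2 =>
    sup_le h1 ((Ideal.span_singleton_le_iff_mem _).2 h2)
  by_cases hJ : J.IsPrime
  · obtain ⟨f, hf, H, hH⟩ := exists_generic_fiberHilbertFunction I hI J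
    refine ((ih _ (hlt f hf)).insert H).subset ?_
    rintro _ ⟨p, hp, hJp, rfl⟩
    by_cases hfp : f ∈ p
    · exact .inr ⟨p, hp, hsup hJp hfp, rfl⟩
    · exact .inl (hH p hJp hfp)
  · rw [Ideal.isPrime_iff] at hJ
    push Not at hJ
    by_cases htop : J = ⊤
    · refine Set.finite_empty.subset ?_
      rintro _ ⟨p, hp, hJp, rfl⟩
      exact hp.ne_top (top_le_iff.1 (htop ▸ hJp))
    · obtain ⟨a, b, hab, ha, hb⟩ := hJ htop
      refine ((ih _ (hlt a ha)).union (ih _ (hlt b hb))).subset ?_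
      rintro _ ⟨p, hp, hJp, rfl⟩
      rcases hp.mem_or_mem (hJp hab) with h | h
      · exact .inl ⟨p, hp, hsup hJp h, rfl⟩
      · exact .inr ⟨p, hp, hsup hJp h, rfl⟩
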